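/- Let p be a prime number and let n ≥ 2 be a natural number. If p^(n-1) divides n!, then p = 2 and n is a power of 2. -/

import Mathlib

open Nat

/-!
For a prime `p`, Legendre's formula says that `p ^ m ∣ n !` exactly when `(p - 1) * m + s ≤ n`,
where `s` is the sum of the base `p` digits of `n`. For `m = a * (n - 1)`, since `s ≥ 1`, this
forces `(p - 1) * a ≤ 1`. So a number whose `(n - 1)`-th power divides `n !` has no odd prime factor
and is not divisible by `4`. Once the number is `2`, the inequality leaves only `s = 1`, so that `n`
has a single nonzero binary digit.
-/

section Digits

variable {R : Type*} [Semiring R]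

theorem ofDigits_eq_zero_of_sum_eq_zero {b : R} {L : List ℕ} (hL : L.sum = 0) :
    ofDigits b L = 0 := by
  induction L with
  | nil => rfl
  | cons d L ih =>
    obtain ⟨hd, hsum⟩ := Nat.add_eq_zero_iff.mp (List.sum_cons.symm.trans hL)
    rw [ofDigits, hd, ih hsum, cast_zero, mul_zero, add_zero]

theorem exists_ofDigits_eq_pow_of_sum_eq_one {b : R} {L : List ℕ} (hL : L.sum = 1) :
    ∃ k : ℕ, ofDigits b L = b ^ k := by
  induction L with
  | nil => contradiction
  | cons d L ih =>
    rcases Nat.add_eq_one_iff.mp (List.sum_cons.symm.trans hL) with ⟨hd, hsum⟩ | ⟨hd, hsum⟩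
    · obtain ⟨k, hk⟩ := ih hsum
      exact ⟨k + 1, by rw [ofDigits, hd, hk, cast_zero, zero_add, _root_.pow_succ']⟩
    · refine ⟨0, ?_⟩
      rw [ofDigits, hd, ofDigits_eq_zero_of_sum_eq_zero hsum, cast_one, mul_zero, add_zero,
        pow_zero]

theorem exists_eq_pow_of_digits_sum_eq_one {b n : ℕ} (hn : (digits b n).sum = 1) :
    ∃ k : ℕ, n = b ^ k := by
  simpa only [ofDigits_digits] using exists_ofDigits_eq_pow_of_sum_eq_one (b := b) hn

theorem digits_sum_pos {b n : ℕ} (hn : n ≠ 0) : 0 < (digits b n).sum := by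
  refine Nat.pos_of_ne_zero fun hsum ↦ hn ?_
  rw [← ofDigits_digits b n, ofDigits_eq_zero_of_sum_eq_zero hsum]

end Digits

section Factorial

variable {p n : ℕ}

theorem pow_dvd_factorial_iff_sub_one_mul_add_digits_sum_le {m : ℕ} (hp : p.Prime) :
    p ^ m ∣ n ! ↔ (p - 1) * m + (digits p n).sum ≤ n := by
  have : Fact p.Prime := ⟨hp⟩
  have hp_sub_pos : 0 < p - 1 := Nat.sub_pos_of_lt hp.one_lt
  rw [padicValNat_dvd_iff_le (factorial_ne_zero n), ← Nat.mul_le_mul_left_iff hp_sub_pos,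
    sub_one_mul_padicValNat_factorial, Nat.le_sub_iff_add_le (digit_sum_le p n)]

theorem sub_one_mul_le_one_of_pow_pow_dvd_factorial {a : ℕ} (hp : p.Prime) (hn : 2 ≤ n)
    (hdvd : (p ^ a) ^ (n - 1) ∣ n !) : (p - 1) * a ≤ 1 := by
  rw [← pow_mul, pow_dvd_factorial_iff_sub_one_mul_add_digits_sum_le hp, ← mul_assoc] at hdvd
  have hsum : 0 < (digits p n).sum := digits_sum_pos (by omega)
  refine Nat.le_of_mul_le_mul_right (c := n - 1) ?_ (by omega)
  omega

theorem eq_two_of_pow_dvd_factorial (hp : 1 < p) (hn : 2 ≤ n) (hdvd : p ^ (n - 1) ∣ n !) :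
    p = 2 := by
  have prime_factor_eq_two {q : ℕ} (hq : q.Prime) (hqp : q ∣ p) : q = 2 := by
    have hq_le : (q - 1) * 1 ≤ 1 := sub_one_mul_le_one_of_pow_pow_dvd_factorial hq hn <| by
      simpa only [pow_one] using (pow_dvd_pow_of_dvd hqp (n - 1)).trans hdvd
    have := hq.two_le
    omega
  obtain ⟨a, rfl⟩ : ∃ a : ℕ, p = 2 ^ a :=
    ⟨_, eq_prime_pow_of_unique_prime_dvd (by omega) prime_factor_eq_two⟩
  have ha_le : (2 - 1) * a ≤ 1 := sub_one_mul_le_one_of_pow_pow_dvd_factorial prime_two hn hdvd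
  have ha_ne : a ≠ 0 := by
    rintro rfl
    exact hp.ne' (pow_zero 2)
  rw [show a = 1 by omega, pow_one]

theorem exists_eq_two_pow_of_two_pow_dvd_factorial (hn : n ≠ 0) (hdvd : 2 ^ (n - 1) ∣ n !) :
    ∃ k : ℕ, n = 2 ^ k := by
  rw [pow_dvd_factorial_iff_sub_one_mul_add_digits_sum_le prime_two] at hdvd
  have hsum : 0 < (digits 2 n).sum := digits_sum_pos hn
  exact exists_eq_pow_of_digits_sum_eq_one (by omega)

end Factorial

theorem prime_pow_dvd_factorial_general {p n : ℕ} (hp : 1 < p) (hn : 2 ≤ n)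
    (hdvd : p ^ (n - 1) ∣ n !) : p = 2 ∧ ∃ k : ℕ, n = 2 ^ k := by
  obtain rfl : p = 2 := eq_two_of_pow_dvd_factorial hp hn hdvd
  exact ⟨rfl, exists_eq_two_pow_of_two_pow_dvd_factorial (by omega) hdvd⟩

/-- The prime case of Lemma 13: if `p` is prime, `n ≥ 2` and `p^(n-1) ∣ n!`,
then `p = 2` and `n` is a power of `2`. -/
theorem prime_pow_dvd_factorial (p n : ℕ) (hp : p.Prime) (hn : 2 ≤ n)
    (hdvd : p ^ (n - 1) ∣ n !) :
    p = 2 ∧ ∃ k : ℕ, n = 2 ^ k :=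
  prime_pow_dvd_factorial_general hp.one_lt hn hdvd
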